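/- The mean of the PBD(α;0,β,1) distribution satisfies 2α(α + β + 1)/(2(β + 1)(α + β) + α²) ≤ ∑_{k=1}^∞ k π_k ≤ α(α + 2β + 2)/(β(α + 2β + 2) + 2α). -/

import Mathlib

/-!
Write `mₖ` for the `k`-th factorial moment of `π`, so that `m₀ = 1` and `m₁` is the mean. Summing
detailed balance `(n + 1) (β + n) πₙ₊₁ = α πₙ` against falling factorials gives
`α mₖ = mₖ₊₂ + (β + k) mₖ₊₁`. Hence the ratios `rₖ = mₖ₊₁ / mₖ` satisfy `rₖ = α / (β + k + rₖ₊₁)`,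
and the mean `r₀` is the continued fraction `α / (β + α / (β + 1 + α / (β + 2 + ⋯)))`, which lies
between its even and odd convergents. Replacing `β + 2` by `2` in the third convergent gives the
upper bound; replacing `α / (β + 2 + α / (β + 3))` by the smaller `α (1 - β) / (α + 2)` in the
fourth gives the lower bound.
-/

section Convergents

variable {K : Type*} [Field K]

/-- The `j`-th convergent of the continued fraction `α / (b + α / (b + 1 + α / (b + 2 + ⋯)))`,
with `j` counting the levels kept; the tail below them is replaced by `0`. -/
def shiftConvergent (α : K) : ℕ → K → K
  | 0, _ => 0
  | j + 1, b => α / (b + shiftConvergent α j (b + 1))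

variable [LinearOrder K] [IsStrictOrderedRing K] {α b : K}

lemma shiftConvergent_nonneg (hα : 0 ≤ α) (j : ℕ) (hb : 0 ≤ b) : 0 ≤ shiftConvergent α j b := by
  induction j generalizing b with
  | zero => exact le_rfl
  | succ j ih => exact div_nonneg hα (add_nonneg hb (ih (by positivity)))

lemma add_shiftConvergent_pos (hα : 0 ≤ α) (j : ℕ) (hb : 0 < b) (k : ℕ) :
    0 < b + k + shiftConvergent α j (b + k + 1) :=
  add_pos_of_pos_of_nonneg (by positivity) (shiftConvergent_nonneg hα j (by positivity))

variable {m : ℕ → K}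

lemma le_shiftConvergent_succ_mul (hα : 0 ≤ α) (hb : 0 < b)
    (hrec : ∀ k : ℕ, α * m k = m (k + 2) + (b + k) * m (k + 1)) {j : ℕ}
    (hlower : ∀ k : ℕ, shiftConvergent α j (b + k) * m k ≤ m (k + 1)) (k : ℕ) :
    m (k + 1) ≤ shiftConvergent α (j + 1) (b + k) * m k := by
  have hnext := hlower (k + 1)
  rw [Nat.cast_add_one, ← add_assoc] at hnext
  rw [shiftConvergent, div_mul_eq_mul_div, le_div_iff₀ (add_shiftConvergent_pos hα j hb k)]
  linarith [hrec k]

lemma shiftConvergent_succ_mul_le (hα : 0 ≤ α) (hb : 0 < b)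
    (hrec : ∀ k : ℕ, α * m k = m (k + 2) + (b + k) * m (k + 1)) {j : ℕ}
    (hupper : ∀ k : ℕ, m (k + 1) ≤ shiftConvergent α j (b + k) * m k) (k : ℕ) :
    shiftConvergent α (j + 1) (b + k) * m k ≤ m (k + 1) := by
  have hnext := hupper (k + 1)
  rw [Nat.cast_add_one, ← add_assoc] at hnext
  rw [shiftConvergent, div_mul_eq_mul_div, div_le_iff₀ (add_shiftConvergent_pos hα j hb k)]
  linarith [hrec k]

theorem shiftConvergent_even_mul_le (hα : 0 ≤ α) (hb : 0 < b) (hm : ∀ k, 0 ≤ m k)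
    (hrec : ∀ k : ℕ, α * m k = m (k + 2) + (b + k) * m (k + 1)) (j k : ℕ) :
    shiftConvergent α (2 * j) (b + k) * m k ≤ m (k + 1) := by
  induction j generalizing k with
  | zero => simpa only [mul_zero, shiftConvergent, zero_mul] using hm (k + 1)
  | succ j ih =>
    exact shiftConvergent_succ_mul_le hα hb hrec (le_shiftConvergent_succ_mul hα hb hrec ih) k

theorem le_shiftConvergent_odd_mul (hα : 0 ≤ α) (hb : 0 < b) (hm : ∀ k, 0 ≤ m k)
    (hrec : ∀ k : ℕ, α * m k = m (k + 2) + (b + k) * m (k + 1)) (j k : ℕ) :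
    m (k + 1) ≤ shiftConvergent α (2 * j + 1) (b + k) * m k :=
  le_shiftConvergent_succ_mul hα hb hrec (shiftConvergent_even_mul_le hα hb hm hrec j) k

lemma shiftConvergent_three_le (hα : 0 ≤ α) (hb : 0 < b) :
    shiftConvergent α 3 b ≤ α * (α + 2 * b + 2) / (b * (α + 2 * b + 2) + 2 * α) := by
  calc shiftConvergent α 3 b
      = α / (b + α / (b + 1 + α / (b + 1 + 1))) := by simp only [shiftConvergent, add_zero]
    _ ≤ α / (b + α / (b + 1 + α / 2)) := by gcongr; linarith
    _ = α * (α + 2 * b + 2) / (b * (α + 2 * b + 2) + 2 * α) := by field_simp; ring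

lemma le_shiftConvergent_four (hα : 0 ≤ α) (hb : 0 < b) :
    2 * α * (α + b + 1) / (2 * (b + 1) * (α + b) + α ^ 2) ≤ shiftConvergent α 4 b := by
  have hinner : α * (1 - b) / (α + 2) ≤ α / (b + 1 + 1 + α / (b + 1 + 1 + 1)) := by
    have htail : (1 - b) * (α / (b + 1 + 1 + 1)) ≤ α := by
      rw [mul_div_assoc', div_le_iff₀ (by positivity)]
      nlinarith [mul_nonneg hα hb.le]
    have hcross : (1 - b) * (b + 1 + 1 + α / (b + 1 + 1 + 1)) ≤ α + 2 := by
      linarith [sq_nonneg b]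
    rw [div_le_div_iff₀ (by positivity) (by positivity), mul_assoc]
    gcongr
  have hdenom : b + 1 + α * (1 - b) / (α + 2) = 2 * (α + b + 1) / (α + 2) := by
    field_simp; ring
  have hdenom_pos : 0 < b + 1 + α * (1 - b) / (α + 2) := by rw [hdenom]; positivity
  calc 2 * α * (α + b + 1) / (2 * (b + 1) * (α + b) + α ^ 2)
      = α / (b + α / (b + 1 + α * (1 - b) / (α + 2))) := by rw [hdenom]; field_simp; ring
    _ ≤ α / (b + α / (b + 1 + α / (b + 1 + 1 + α / (b + 1 + 1 + 1)))) := by gcongr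
    _ = shiftConvergent α 4 b := by simp only [shiftConvergent, add_zero]

end Convergents

section FactorialMoments

lemma cast_descFactorial_succ {R : Type*} [Ring R] (n k : ℕ) :
    (n.descFactorial (k + 1) : R) = n.descFactorial k * (n - k) := by
  simp only [← descPochhammer_eval_eq_descFactorial, descPochhammer_succ_eval]

lemma cast_succ_descFactorial_succ {R : Type*} [Semiring R] (n k : ℕ) :
    ((n + 1).descFactorial (k + 1) : R) = (n + 1) * n.descFactorial k := by
  rw [Nat.succ_descFactorial_succ, Nat.cast_mul, Nat.cast_add_one]

/-- The `k`-th factorial moment `∑ n (n - 1) ⋯ (n - k + 1) πₙ` of a weight on `ℕ`; it is `0` by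
convention when the series diverges. -/
noncomputable def factorialMoment (π : ℕ → ℝ) (k : ℕ) : ℝ :=
  ∑' n : ℕ, (n.descFactorial k : ℝ) * π n

lemma factorialMoment_zero (π : ℕ → ℝ) : factorialMoment π 0 = ∑' n, π n := by
  simp only [factorialMoment, Nat.descFactorial_zero, Nat.cast_one, one_mul]

lemma factorialMoment_one (π : ℕ → ℝ) : factorialMoment π 1 = ∑' n : ℕ, (n : ℝ) * π n := by
  simp only [factorialMoment, Nat.descFactorial_one]

lemma factorialMoment_nonneg {π : ℕ → ℝ} (hπ : ∀ n, 0 ≤ π n) (k : ℕ) : 0 ≤ factorialMoment π k :=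
  tsum_nonneg fun n ↦ mul_nonneg (Nat.cast_nonneg _) (hπ n)

lemma factorialMoment_succ {π : ℕ → ℝ} {k : ℕ}
    (hs : Summable fun n : ℕ ↦ (n.descFactorial (k + 1) : ℝ) * π n) :
    factorialMoment π (k + 1) =
      ∑' n : ℕ, ((n + 1) * n.descFactorial k : ℝ) * π (n + 1) := by
  rw [factorialMoment, hs.tsum_eq_zero_add]
  simp only [Nat.zero_descFactorial_succ, Nat.cast_zero, zero_mul, zero_add,
    cast_succ_descFactorial_succ]

end FactorialMoments

section DetailedBalance

/-- Detailed balance on `ℕ` for the birth-death chain with birth rate `α` and death rate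
`β n + n (n - 1)`, written for the edge between `n` and `n + 1`, so the death rate appears as
`(n + 1) (β + n)`. Its normalised solution is the distribution `PBD(α; 0, β, 1)`. -/
def PBDBalance (α β : ℝ) (π : ℕ → ℝ) : Prop :=
  ∀ n : ℕ, ((n : ℝ) + 1) * (β + n) * π (n + 1) = α * π n

lemma mul_pow_div_prod_range_succ {K : Type*} [Field K] (C a : K) {d : ℕ → K} (n : ℕ)
    (hd : d n ≠ 0) :
    d n * (C * a ^ (n + 1) / ∏ i ∈ Finset.range (n + 1), d i) =
      a * (C * a ^ n / ∏ i ∈ Finset.range n, d i) := by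
  rw [Finset.prod_range_succ, pow_succ', mul_left_comm C, ← div_div, mul_div_cancel₀ _ hd,
    mul_div_assoc]

variable {α β : ℝ} {π : ℕ → ℝ}

lemma PBDBalance.of_eq_pow_div_prod (hβ : 0 < β) {C : ℝ}
    (hπ : ∀ n : ℕ, π n =
      C * α ^ n / ∏ i ∈ Finset.range n, (β * ((i : ℝ) + 1) + ((i : ℝ) + 1) * (i : ℝ))) :
    PBDBalance α β π := fun n ↦ by
  have hdeath : β * ((n : ℝ) + 1) + ((n : ℝ) + 1) * n ≠ 0 := by positivity
  rw [hπ (n + 1), hπ n, ← mul_pow_div_prod_range_succ C α n hdeath]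
  ring

/-- Detailed balance trades one more falling factor at `n + 1` for the bounded factor `α / β`. -/
lemma PBDBalance.summable_descFactorial_mul (hbal : PBDBalance α β π) (hβ : 0 < β)
    (hs : Summable π) (k : ℕ) : Summable fun n : ℕ ↦ (n.descFactorial k : ℝ) * π n := by
  induction k with
  | zero => simpa only [Nat.descFactorial_zero, Nat.cast_one, one_mul] using hs
  | succ k ih =>
    rw [← summable_nat_add_iff 1]
    refine (ih.norm.mul_left (|α| / β)).of_norm_bounded fun n ↦ ?_
    have hstep : β * (((n : ℝ) + 1) * |π (n + 1)|) ≤ |α| * |π n| := calc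
      β * (((n : ℝ) + 1) * |π (n + 1)|) ≤ (β + n) * (((n : ℝ) + 1) * |π (n + 1)|) := by
        gcongr; exact le_add_of_nonneg_right n.cast_nonneg
      _ = |((n : ℝ) + 1) * (β + n) * π (n + 1)| := by
        rw [abs_mul, abs_of_nonneg (by positivity : 0 ≤ ((n : ℝ) + 1) * (β + n))]; ring
      _ = |α| * |π n| := by rw [hbal n, abs_mul]
    calc ‖((n + 1).descFactorial (k + 1) : ℝ) * π (n + 1)‖
        = n.descFactorial k * (((n : ℝ) + 1) * |π (n + 1)|) := by
          rw [cast_succ_descFactorial_succ, Real.norm_eq_abs, abs_mul,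
            abs_of_nonneg (by positivity)]
          ring
      _ ≤ n.descFactorial k * (|α| * |π n| / β) := by
          gcongr
          exact (le_div_iff₀' hβ).2 hstep
      _ = |α| / β * ‖(n.descFactorial k : ℝ) * π n‖ := by
          rw [Real.norm_eq_abs, abs_mul, Nat.abs_cast]
          ring

theorem PBDBalance.mul_factorialMoment (hbal : PBDBalance α β π) (hβ : 0 < β) (hs : Summable π)
    (k : ℕ) :
    α * factorialMoment π k = factorialMoment π (k + 2) + (β + k) * factorialMoment π (k + 1) := by
  have hsum := hbal.summable_descFactorial_mul hβ hs
  have hshift (j : ℕ) :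
      Summable fun n : ℕ ↦ ((n + 1) * n.descFactorial j : ℝ) * π (n + 1) := by
    simpa only [cast_succ_descFactorial_succ] using (summable_nat_add_iff 1).2 (hsum (j + 1))
  rw [factorialMoment_succ (hsum (k + 2)), factorialMoment_succ (hsum (k + 1)), factorialMoment,
    ← tsum_mul_left, ← tsum_mul_left, ← (hshift (k + 1)).tsum_add ((hshift k).mul_left _)]
  refine tsum_congr fun n ↦ ?_
  rw [cast_descFactorial_succ]
  linear_combination -(n.descFactorial k : ℝ) * hbal n

end DetailedBalance

/-- two-sided bound on the mean of PBD(α;0,β,1). -/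
theorem stmt_14
    (α β : ℝ) (hα : 0 < α) (hβ : 0 < β)
    (C : ℝ) (hC : 0 < C) (π : ℕ → ℝ)
    (hπ : ∀ n : ℕ, π n =
      C * α ^ n / ∏ i ∈ Finset.range n, (β * ((i : ℝ) + 1) + ((i : ℝ) + 1) * (i : ℝ)))
    (hπ1 : ∑' n, π n = 1)
    :
    2 * α * (α + β + 1) / (2 * (β + 1) * (α + β) + α ^ 2) ≤ ∑' k : ℕ, (k : ℝ) * π k ∧
      ∑' k : ℕ, (k : ℝ) * π k ≤ α * (α + 2 * β + 2) / (β * (α + 2 * β + 2) + 2 * α) := by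
  have hbal : PBDBalance α β π := .of_eq_pow_div_prod hβ hπ
  have hs : Summable π :=
    not_imp_comm.1 tsum_eq_zero_of_not_summable (hπ1.trans_ne one_ne_zero)
  have hrec := hbal.mul_factorialMoment hβ hs
  have hnonneg : ∀ n, 0 ≤ π n := fun n ↦ by rw [hπ]; positivity
  have hm := factorialMoment_nonneg hnonneg
  have hlower := shiftConvergent_even_mul_le hα.le hβ hm hrec 2 0
  have hupper := le_shiftConvergent_odd_mul hα.le hβ hm hrec 1 0
  simp only [Nat.cast_zero, add_zero, zero_add, factorialMoment_zero, factorialMoment_one, hπ1,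
    mul_one] at hlower hupper
  exact ⟨(le_shiftConvergent_four hα.le hβ).trans hlower,
    hupper.trans (shiftConvergent_three_le hα.le hβ)⟩
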